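/- arXiv:1309.5588 — 2 statements merged into one kernel-verified Lean document; each statement's English description precedes it below -/
import Mathlib

section
/- Let S = G ∪ N be a finite elementary semigroup. Then E(S) = D(S) + κ(S) − 1. -/
namespace EGZ

variable {S : Type}

/-- `rep a n = (n+1)·a`, the (n+1)-fold sum of `a` with itself (defined for semigroups,
where the 0-fold sum is unavailable). -/
def rep [AddCommSemigroup S] (a : S) : ℕ → S
  | 0 => a
  | n + 1 => rep a n + a

/-- The sum of all terms of a sequence (= multiset) over the semigroup `S`, computed in
`WithZero S` (i.e. `S` with an extra identity element `0` adjoined); the empty sequence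
has sum `0`, and a nonempty sequence has sum `↑s` where `s ∈ S` is its genuine sum. -/
def mSum [AddCommSemigroup S] (T : Multiset S) : WithZero S :=
  (T.map (fun s => (s : WithZero S))).sum

/-- `σ(A) = σ(B)`, with the paper's convention: the empty sequence is regarded as having
sum equal to the identity element `e` of `S`, whenever `S` has an identity element. -/
def EqSum [AddCommSemigroup S] (A B : Multiset S) : Prop :=
  mSum A = mSum B ∨
    ∃ e : S, (∀ a : S, e + a = a) ∧
      ((mSum A = 0 ∧ mSum B = (e : WithZero S)) ∨
        (mSum A = (e : WithZero S) ∧ mSum B = 0))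

/-- A sequence `T` over `S` is reducible if some proper subsequence `B` of `T`
satisfies `σ(B) = σ(T)`. -/
def Reducible [AddCommSemigroup S] (T : Multiset S) : Prop :=
  ∃ B : Multiset S, B < T ∧ EqSum B T

/-- The (large) Davenport constant `D(S)`: the smallest `ℓ` such that every sequence over
`S` of length at least `ℓ` is reducible. -/
noncomputable def DavC (S : Type) [AddCommSemigroup S] : ℕ :=
  sInf {ℓ : ℕ | ∀ T : Multiset S, ℓ ≤ Multiset.card T → Reducible T}

/-- The property defining the small Davenport constant: `ℓ` is admissible if for every `m`
and every `c₁, …, c_m ∈ S` there is `J ⊆ [1, m]` with `|J| ≤ ℓ` and `Σ_{j=1}^m c_j = Σ_{j∈J} c_j`. -/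
def SmallDavProp (S : Type) [AddCommSemigroup S] (ℓ : ℕ) : Prop :=
  ∀ (m : ℕ) (c : Fin m → S), ∃ J : Finset (Fin m),
    J.card ≤ ℓ ∧ EqSum (J.val.map c) ((Finset.univ : Finset (Fin m)).val.map c)

/-- The small Davenport constant `d(S)`. -/
noncomputable def smallDavC (S : Type) [AddCommSemigroup S] : ℕ :=
  sInf {ℓ : ℕ | SmallDavProp S ℓ}

/-- The period of an element `a ∈ S`: the least `t > 0` such that `r·a = (r+t)·a`
for some `r > 0`. -/
noncomputable def period [AddCommSemigroup S] (a : S) : ℕ :=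
  sInf {t : ℕ | 0 < t ∧ ∃ k : ℕ, rep a (k + t) = rep a k}

/-- `exp(S)`: the least common multiple of the periods of all elements of `S`. -/
noncomputable def expS (S : Type) [AddCommSemigroup S] [Fintype S] : ℕ :=
  (Finset.univ : Finset S).lcm (fun a => period a)

/-- `κ(S) = ⌈|S| / exp(S)⌉ · exp(S)`. -/
noncomputable def kappa (S : Type) [AddCommSemigroup S] [Fintype S] : ℕ :=
  ((Fintype.card S + expS S - 1) / expS S) * expS S

/-- `E(S)`: the smallest positive integer `ℓ` such that every sequence `T` over `S` of
length at least `ℓ` contains a subsequence `T'` with `|T| - |T'| = κ(S)` and `σ(T') = σ(T)`. -/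
noncomputable def EC (S : Type) [AddCommSemigroup S] [Fintype S] : ℕ :=
  sInf {ℓ : ℕ | 0 < ℓ ∧ ∀ T : Multiset S, ℓ ≤ Multiset.card T →
    ∃ B : Multiset S, B ≤ T ∧ Multiset.card T - Multiset.card B = kappa S ∧ EqSum B T}

end EGZ

/-- A finite commutative semigroup `S` is elementary with respect to subsets `G` and `N`:
`S` is the disjoint union of `G` and `N`; `G` is (under the addition of `S`) an abelian
group whose identity element is an identity element of all of `S`; `N` is an ideal of `S`
and is a nilsemigroup whose zero element `z` is a zero element of all of `S`. -/
def IsElementary (S : Type) [AddCommSemigroup S] (G N : Set S) : Prop :=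
  (∀ x : S, x ∈ G ∨ x ∈ N) ∧ Disjoint G N ∧
  (∀ a ∈ G, ∀ b ∈ G, a + b ∈ G) ∧
  (∃ e ∈ G, (∀ a : S, e + a = a) ∧ ∀ a ∈ G, ∃ b ∈ G, a + b = e) ∧
  (∀ a ∈ N, ∀ s : S, a + s ∈ N) ∧
  (∃ z ∈ N, (∀ a : S, z + a = z) ∧ ∀ x ∈ N, ∃ n : ℕ, EGZ.rep x n = z)

/-!
For the lower bound, append `κ - 1` zeros to a longest irreducible sequence.

For the upper bound, let `T` have length at least `D + κ - 1`. If `σ(T)` is absorbing, `T` has a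
subsequence of length less than `D` with the same sum, and adding any further terms of `T` to it
keeps the sum absorbing. Otherwise let `N` consist of the non-units in `T` and let `K` be the
stabilizer of `σ(N)` in the group of units. Since `c + u = u` forces `c` to be a unit or `u` to be
absorbing, only units can be removed from a sequence without changing its nonabsorbing sum.
Applied to `N` together with `D - |N|` arbitrary units, this shows that any `D - |N|` elements of
the quotient by `K` have a nonempty zero-sum subsequence. By Gao's theorem, the units in `T`, of
which there are at least `D - |N| + κ - 1`, therefore include `κ` units whose sum lies in `K`, and
removing these preserves `σ(T)`.

Gao's theorem is proved by translating a most frequent term, of multiplicity `h`, to zero. By the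
Kemperman–Scherk inequality, sequences of length `|Q|` with multiplicities at most `h` have
zero-sum subsequences of length at most `h`. Removing these one at a time from a long zero-sum
sequence of nonzero terms brings its length into `[κ - h, κ]`, and zeros fill the gap.
-/

namespace EGZ

open Finset (range)
open Multiset (card count)
open scoped Pointwise

theorem exists_le_map_eq_of_le_map {α β : Type*} {f : α → β} {s : Multiset α} {t : Multiset β}
    (h : t ≤ s.map f) : ∃ s' ≤ s, s'.map f = t := by
  induction s, t using Quotient.inductionOn₂ with | _ s t
  obtain ⟨l, hperm, hsub⟩ := h
  obtain ⟨s', hs', rfl⟩ := List.sublist_map_iff.1 hsub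
  exact ⟨s', hs'.subperm, Quot.sound hperm⟩

theorem exists_le_card_eq {α : Type*} {s : Multiset α} {n : ℕ} (hn : n ≤ card s) :
    ∃ t ≤ s, card t = n := by
  induction s using Quotient.inductionOn with | _ l
  exact ⟨l.take n, (List.take_sublist n l).subperm, List.length_take_of_le hn⟩

/-! ### Short zero-sum subsequences -/

theorem uniqueAdd_addDysonETransform {Q : Type*} [AddCommGroup Q] [DecidableEq Q]
    {A B : Finset Q} {a a₀ b₀ : Q} (h : UniqueAdd A B a₀ b₀) (ha : a ∈ A) :
    UniqueAdd (Finset.addDysonETransform (a - b₀) (A, B)).1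
      (Finset.addDysonETransform (a - b₀) (A, B)).2 a₀ b₀ := by
  intro x y hx hy hxy
  obtain ⟨hyB, hyA⟩ := Finset.mem_inter.1 hy
  rw [Finset.mem_neg_vadd_finset_iff, vadd_eq_add] at hyA
  rcases Finset.mem_union.1 hx with hx | hx
  · exact h hx hyB hxy
  · obtain ⟨c, hc, rfl⟩ := Finset.mem_vadd_finset.1 hx
    rw [vadd_eq_add] at hxy ⊢
    obtain ⟨hay, rfl⟩ := h hyA hc (by rw [← hxy]; abel)
    obtain ⟨rfl, rfl⟩ := h ha hyB (by rw [← hxy]; abel)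
    exact ⟨sub_add_cancel .., rfl⟩

theorem eq_singleton_of_uniqueAdd {Q : Type*} [AddCommGroup Q] {A B : Finset Q} {a₀ b₀ : Q}
    (ha₀ : a₀ ∈ A) (hb₀ : b₀ ∈ B) (h : UniqueAdd A B a₀ b₀)
    (hshift : ∀ a ∈ A, ∀ b ∈ B, a - b₀ + b ∈ A) : B = {b₀} := by
  classical
  refine Finset.eq_singleton_iff_unique_mem.2 ⟨hb₀, fun b hb => ?_⟩
  have himage : A.image (· - b₀ + b) = A :=
    Finset.eq_of_subset_of_card_le (Finset.image_subset_iff.2 fun a ha => hshift a ha b hb)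
      (Finset.card_image_of_injective _ fun x y hxy => by simpa using hxy).ge
  obtain ⟨a, ha, haa₀⟩ := Finset.mem_image.1 (himage.symm ▸ ha₀)
  exact (h ha hb (by rw [← haa₀]; abel)).2

/-- The Kemperman–Scherk inequality. -/
theorem card_add_card_le_of_uniqueAdd {Q : Type*} [AddCommGroup Q] [DecidableEq Q]
    {A B : Finset Q} {a₀ b₀ : Q} (ha₀ : a₀ ∈ A) (hb₀ : b₀ ∈ B) (h : UniqueAdd A B a₀ b₀) :
    A.card + B.card ≤ (A + B).card + 1 := by
  induction B using Finset.strongInduction generalizing A with | H B ih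
  by_cases! hshift : ∀ a ∈ A, ∀ b ∈ B, a - b₀ + b ∈ A
  · simp [eq_singleton_of_uniqueAdd ha₀ hb₀ h hshift]
  obtain ⟨a, ha, b, hb, hab⟩ := hshift
  set A' := (Finset.addDysonETransform (a - b₀) (A, B)).1
  set B' := (Finset.addDysonETransform (a - b₀) (A, B)).2
  have mem_B' (x : Q) : x ∈ B' ↔ x ∈ B ∧ a - b₀ + x ∈ A := by
    rw [← vadd_eq_add, ← Finset.mem_neg_vadd_finset_iff]
    exact Finset.mem_inter
  have hB' : B' ⊂ B := ⟨Finset.inter_subset_left, fun hsub => hab ((mem_B' b).1 (hsub hb)).2⟩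
  calc A.card + B.card = A'.card + B'.card := (Finset.addDysonETransform.card _ (A, B)).symm
    _ ≤ (A' + B').card + 1 := ih B' hB' (Finset.mem_union_left _ ha₀)
        ((mem_B' b₀).2 ⟨hb₀, by simpa using ha⟩) (uniqueAdd_addDysonETransform h ha)
    _ ≤ (A + B).card + 1 := Nat.add_le_add_right
        (Finset.card_le_card (Finset.addDysonETransform.subset _ (A, B))) 1

section LevelSet

variable {α : Type*} [DecidableEq α]

/-- The set of elements occurring more than `j` times in `U`. -/
def levelSet (U : Multiset α) (j : ℕ) : Finset α :=
  {x ∈ U.toFinset | j < count x U}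

theorem sum_card_levelSet {U : Multiset α} {h : ℕ} (hU : ∀ x, count x U ≤ h) :
    ∑ j ∈ range h, (levelSet U j).card = card U := by
  calc ∑ j ∈ range h, (levelSet U j).card
      = ∑ x ∈ U.toFinset, ((range h).filter (· < count x U)).card :=
        Finset.sum_card_bipartiteAbove_eq_sum_card_bipartiteBelow _
    _ = ∑ x ∈ U.toFinset, count x U := Finset.sum_congr rfl fun x _ => by
        rw [← Finset.card_range (count x U)]
        congr 1
        ext j
        simpa using fun hj => hj.trans_le (hU x)
    _ = card U := U.toFinset_sum_count_eq

theorem cons_le_of_mem_levelSet {U W : Multiset α} {j : ℕ} {x : α} (hW : W ≤ U)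
    (hWj : card W ≤ j) (hx : x ∈ levelSet U j) : x ::ₘ W ≤ U := by
  refine Multiset.le_iff_count.2 fun y => ?_
  obtain rfl | hyx := eq_or_ne y x
  · have hcount : j < count y U := (Finset.mem_filter.1 hx).2
    have := Multiset.count_le_card y W
    rw [Multiset.count_cons_self]
    lia
  · rw [Multiset.count_cons_of_ne hyx]
    exact Multiset.count_le_of_le y hW

end LevelSet

section Subsums

variable {M : Type*} [AddCommMonoid M] [DecidableEq M]

/-- The set of sums of the subsequences of `U` of length at most `j`. -/
def subsums (U : Multiset M) (j : ℕ) : Finset M :=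
  ((U.powerset.filter (card · ≤ j)).map Multiset.sum).toFinset

theorem mem_subsums {U : Multiset M} {j : ℕ} {x : M} :
    x ∈ subsums U j ↔ ∃ W ≤ U, card W ≤ j ∧ W.sum = x := by
  simp [subsums, and_assoc]

theorem zero_mem_subsums (U : Multiset M) (j : ℕ) : 0 ∈ subsums U j :=
  mem_subsums.2 ⟨0, Multiset.zero_le U, by simp⟩

theorem add_insert_levelSet_subset_subsums (U : Multiset M) (j : ℕ) :
    subsums U j + insert 0 (levelSet U j) ⊆ subsums U (j + 1) := by
  rintro _ hz
  obtain ⟨_, hx, y, hy, rfl⟩ := Finset.mem_add.1 hz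
  obtain ⟨W, hWU, hWj, rfl⟩ := mem_subsums.1 hx
  rcases Finset.mem_insert.1 hy with rfl | hy
  · exact mem_subsums.2 ⟨W, hWU, by lia, by simp⟩
  · exact mem_subsums.2
      ⟨y ::ₘ W, cons_le_of_mem_levelSet hWU hWj hy, by simpa using hWj, by simp [add_comm]⟩

end Subsums

section ShortZeroSum

variable {Q : Type*} [AddCommGroup Q] [DecidableEq Q]

theorem card_subsums_add_card_levelSet_le {U : Multiset Q} {j : ℕ}
    (hU : ∀ W ≤ U, W ≠ 0 → card W ≤ j + 1 → W.sum ≠ 0) :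
    (subsums U j).card + (levelSet U j).card ≤ (subsums U (j + 1)).card := by
  have hzero : 0 ∉ levelSet U j := fun h₀ =>
    hU (0 ::ₘ 0) (cons_le_of_mem_levelSet (Multiset.zero_le U) (by simp) h₀) (by simp) (by simp)
      (by simp)
  have hunique : UniqueAdd (subsums U j) (insert 0 (levelSet U j)) 0 0 := by
    intro x y hx hy hxy
    rw [add_zero] at hxy
    obtain ⟨W, hWU, hWj, rfl⟩ := mem_subsums.1 hx
    rcases Finset.mem_insert.1 hy with rfl | hy
    · exact ⟨by simpa using hxy, rfl⟩
    · exact absurd (by rw [Multiset.sum_cons, add_comm, hxy])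
        (hU (y ::ₘ W) (cons_le_of_mem_levelSet hWU hWj hy) (by simp) (by simpa using hWj))
  have hscherk := card_add_card_le_of_uniqueAdd (zero_mem_subsums U j)
    (Finset.mem_insert_self 0 _) hunique
  have hsubset := Finset.card_le_card (add_insert_levelSet_subset_subsums U j)
  rw [Finset.card_insert_of_notMem hzero] at hscherk
  lia

theorem one_add_sum_card_levelSet_le_card_subsums {U : Multiset Q} {h : ℕ}
    (hU : ∀ W ≤ U, W ≠ 0 → card W ≤ h → W.sum ≠ 0) :
    1 + ∑ j ∈ range h, (levelSet U j).card ≤ (subsums U h).card := by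
  induction h with
  | zero => simpa using Finset.card_pos.2 ⟨0, zero_mem_subsums U 0⟩
  | succ h ih =>
    have hprev := ih fun W hWU hW hWh => hU W hWU hW (hWh.trans h.le_succ)
    have hstep := card_subsums_add_card_levelSet_le hU
    rw [Finset.sum_range_succ]
    lia

theorem exists_zeroSum_card_le [Finite Q] {U : Multiset Q} {h : ℕ} (hU : Nat.card Q ≤ card U)
    (hcount : ∀ x, count x U ≤ h) : ∃ W ≤ U, W ≠ 0 ∧ card W ≤ h ∧ W.sum = 0 := by
  by_contra! hfree
  have hlower := one_add_sum_card_levelSet_le_card_subsums hfree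
  have hupper : (subsums U h).card ≤ Nat.card Q := by
    have := Fintype.ofFinite Q
    exact Nat.card_eq_fintype_card (α := Q) ▸ Finset.card_le_univ _
  rw [sum_card_levelSet hcount] at hlower
  lia

theorem exists_zeroSum_card_le_and_le_add [Finite Q] {U : Multiset Q} {h m : ℕ}
    (hm : Nat.card Q ≤ m) (hcount : ∀ x, count x U ≤ h) (hU : m ≤ card U + h)
    (hsum : U.sum = 0) : ∃ W ≤ U, card W ≤ m ∧ m ≤ card W + h ∧ W.sum = 0 := by
  induction U using Multiset.strongInductionOn with | ih U ih
  by_cases hle : card U ≤ m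
  · exact ⟨U, le_rfl, hle, hU, hsum⟩
  obtain ⟨V, hVU, hV, hVh, hVsum⟩ := exists_zeroSum_card_le (by lia) hcount
  obtain ⟨R, rfl⟩ := Multiset.le_iff_exists_add.1 hVU
  have hRU : R ≤ V + R := Multiset.le_add_left R V
  have hcard := Multiset.card_add V R
  obtain ⟨W, hWR, hW⟩ := ih R (lt_add_of_pos_left R (pos_iff_ne_zero.2 hV))
    (fun x => (Multiset.count_le_of_le x hRU).trans (hcount x)) (by lia)
    (by simpa [hVsum] using hsum)
  exact ⟨W, hWR.trans hRU, hW⟩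

end ShortZeroSum

/-! ### Gao's theorem -/

/-- Every sequence over `Q` of length at least `k` has a nonempty zero-sum subsequence; for a
finite abelian group `Q`, this says that the Davenport constant of `Q` is at most `k`. -/
def ForcesZeroSum (Q : Type*) [AddCommMonoid Q] (k : ℕ) : Prop :=
  ∀ V : Multiset Q, k ≤ card V → ∃ W ≤ V, W ≠ 0 ∧ W.sum = 0

theorem ForcesZeroSum.pos {Q : Type*} [AddCommMonoid Q] {k : ℕ} (hk : ForcesZeroSum Q k) :
    0 < k := by
  by_contra! hk₀
  obtain ⟨W, hW, hWne, -⟩ := hk 0 hk₀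
  exact hWne (nonpos_iff_eq_zero.1 hW)

theorem ForcesZeroSum.exists_zeroSum_card_lt {Q : Type*} [AddCommMonoid Q] {k : ℕ}
    (hk : ForcesZeroSum Q k) (U : Multiset Q) :
    ∃ W ≤ U, W.sum = 0 ∧ card U < card W + k := by
  induction U using Multiset.strongInductionOn with | ih U ih
  by_cases hU : card U < k
  · exact ⟨0, Multiset.zero_le U, Multiset.sum_zero, by simpa using hU⟩
  obtain ⟨V, hVU, hV, hVsum⟩ := hk U (not_lt.1 hU)
  obtain ⟨R, rfl⟩ := Multiset.le_iff_exists_add.1 hVU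
  obtain ⟨W, hWR, hWsum, hW⟩ := ih R (lt_add_of_pos_left R (pos_iff_ne_zero.2 hV))
  refine ⟨V + W, by gcongr, by simp [hVsum, hWsum], ?_⟩
  simp only [Multiset.card_add]
  lia

section Gao

variable {Q : Type*} [AddCommGroup Q] [Finite Q] {k m : ℕ}

theorem ForcesZeroSum.exists_zeroSum_card_eq_of_count_le_count_zero [DecidableEq Q]
    (hk : ForcesZeroSum Q k) (hm : Nat.card Q ≤ m) {T : Multiset Q} (hT : k + m ≤ card T + 1)
    (hcount : ∀ x, count x T ≤ count 0 T) : ∃ W ≤ T, card W = m ∧ W.sum = 0 := by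
  have hsplit : Multiset.replicate (count 0 T) 0 + T.filter (· ≠ 0) = T := by
    rw [← Multiset.filter_eq', Multiset.filter_add_not]
  have hcard : count 0 T + card (T.filter (· ≠ 0)) = card T := by
    simpa using congrArg card hsplit
  obtain ⟨U, hU, hUsum, hUcard⟩ := hk.exists_zeroSum_card_lt (T.filter (· ≠ 0))
  obtain ⟨W, hWU, hWm, hmW, hWsum⟩ := exists_zeroSum_card_le_and_le_add hm
    (fun x => (Multiset.count_le_of_le x (hU.trans (Multiset.filter_le _ T))).trans (hcount x))
    (by lia) hUsum
  refine ⟨Multiset.replicate (m - card W) 0 + W, ?_, by simp [hWm], by simp [hWsum]⟩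
  calc Multiset.replicate (m - card W) 0 + W
      ≤ Multiset.replicate (count 0 T) 0 + T.filter (· ≠ 0) :=
        add_le_add ((Multiset.replicate_le_replicate 0).2 (by lia)) (hWU.trans hU)
    _ = T := hsplit

theorem ForcesZeroSum.exists_zeroSum_card_eq (hk : ForcesZeroSum Q k) (hm : Nat.card Q ≤ m)
    (hexp : ∀ q : Q, m • q = 0) {T : Multiset Q} (hT : k + m ≤ card T + 1) :
    ∃ W ≤ T, card W = m ∧ W.sum = 0 := by
  classical
  obtain ⟨g, hg⟩ := Finite.exists_max (count · T)
  -- Translating `T` by `-g` shifts the sum of a subsequence of length `m` by `m • g = 0`.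
  have hcount (x : Q) : count x (T.map (· - g)) = count (x + g) T := by
    simpa using Multiset.count_map_eq_count' (· - g) T sub_left_injective (x + g)
  obtain ⟨W', hW', hcard, hsum⟩ := hk.exists_zeroSum_card_eq_of_count_le_count_zero hm
    (T := T.map (· - g)) (by simpa using hT) (fun x => by simpa [hcount] using hg (x + g))
  obtain ⟨W, hWT, rfl⟩ := exists_le_map_eq_of_le_map hW'
  rw [Multiset.card_map] at hcard
  refine ⟨W, hWT, hcard, ?_⟩
  simpa [Multiset.sum_map_sub, hcard, hexp] using hsum

end Gao

/-! ### The invariants `D`, `κ` and `E` of a finite commutative monoid -/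

section Monoid

variable {M : Type} [AddCommMonoid M]

theorem lift_mSum (T : Multiset M) : WithZero.lift (AddHom.id M) (mSum T) = T.sum := by
  rw [mSum, map_multiset_sum, Multiset.map_map]
  simp [Function.comp_def]

theorem eqSum_iff {A B : Multiset M} : EqSum A B ↔ A.sum = B.sum := by
  rw [← lift_mSum A, ← lift_mSum B, EqSum]
  constructor
  · rintro (h | ⟨e, he, ⟨hA, hB⟩ | ⟨hA, hB⟩⟩)
    · rw [h]
    all_goals
      have he₀ : e = 0 := by simpa using he 0
      simp [hA, hB, he₀]
  · intro h
    cases hA : mSum A <;> cases hB : mSum B <;>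
      simp only [hA, hB, map_zero, WithZero.lift_coe, AddHom.id_apply] at h
    · exact .inl rfl
    · exact .inr ⟨0, zero_add, .inl ⟨rfl, by rw [h]⟩⟩
    · exact .inr ⟨0, zero_add, .inr ⟨by rw [h], rfl⟩⟩
    · exact .inl (by rw [h])

theorem reducible_iff {T : Multiset M} : Reducible T ↔ ∃ B < T, B.sum = T.sum :=
  exists_congr fun _ => and_congr_right fun _ => eqSum_iff

theorem reducible_of_natCard_le [Finite M] {T : Multiset M} (hT : Nat.card M ≤ card T) :
    Reducible T := by
  induction T using Quotient.inductionOn with | _ L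
  obtain ⟨i, j, hij, heq⟩ : ∃ i j : Fin (L.length + 1), i < j ∧
      (L.take i).sum = (L.take j).sum := by
    have := Fintype.ofFinite M
    obtain ⟨i, j, hij, heq⟩ := Fintype.exists_ne_map_eq_of_card_lt
      (fun i : Fin (L.length + 1) => (L.take i).sum)
      (by simpa [Nat.card_eq_fintype_card, Nat.lt_succ_iff] using hT)
    exact hij.lt_or_gt.elim (⟨i, j, ·, heq⟩) (⟨j, i, ·, heq.symm⟩)
  have hsub : (L.take i ++ L.drop j).Sublist L := by
    simpa using (List.take_sublist_take_left (l := L) hij.le).append_right (L.drop j)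
  refine reducible_iff.2 ⟨L.take i ++ L.drop j, lt_of_le_of_ne hsub.subperm fun h => ?_, ?_⟩
  · have := congrArg card h
    simp only [Multiset.quot_mk_to_coe, Multiset.coe_card, List.length_append, List.length_take,
      List.length_drop] at this
    lia
  · calc (L.take i ++ L.drop j).sum = (L.take j ++ L.drop j).sum := by
          rw [List.sum_append, List.sum_append, heq]
      _ = L.sum := by rw [List.take_append_drop]

theorem reducible_of_davC_le [Finite M] {T : Multiset M} (hT : DavC M ≤ card T) : Reducible T :=
  Nat.sInf_mem (s := {ℓ | ∀ T : Multiset M, ℓ ≤ card T → Reducible T})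
    ⟨Nat.card M, fun _ => reducible_of_natCard_le⟩ T hT

theorem davC_pos [Finite M] : 0 < DavC M := by
  by_contra! hD
  obtain ⟨B, hB, -⟩ := reducible_iff.1 (reducible_of_davC_le (M := M) (T := 0) hD)
  exact (Multiset.zero_le B).not_gt hB

theorem exists_not_reducible [Finite M] :
    ∃ T : Multiset M, ¬ Reducible T ∧ DavC M ≤ card T + 1 := by
  have hlt : DavC M - 1 < DavC M := Nat.pred_lt davC_pos.ne'
  have hnot := Nat.notMem_of_lt_sInf hlt
  simp only [Set.mem_ofPred_eq, not_forall] at hnot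
  obtain ⟨T, hcard, hT⟩ := hnot
  exact ⟨T, hT, by lia⟩

theorem exists_le_card_lt_davC_sum_eq [Finite M] (T : Multiset M) :
    ∃ B ≤ T, card B < DavC M ∧ B.sum = T.sum := by
  induction T using Multiset.strongInductionOn with | ih T ih
  by_cases hT : card T < DavC M
  · exact ⟨T, le_rfl, hT, rfl⟩
  obtain ⟨B, hBT, hsum⟩ := reducible_iff.1 (reducible_of_davC_le (not_lt.1 hT))
  obtain ⟨B', hB', hcard, hsum'⟩ := ih B hBT
  exact ⟨B', hB'.trans hBT.le, hcard, hsum'.trans hsum⟩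

theorem rep_eq_nsmul (a : M) (n : ℕ) : rep a n = (n + 1) • a := by
  induction n with
  | zero => simp [rep]
  | succ n ih => rw [rep, ih, succ_nsmul a (n + 1)]

theorem period_spec [Finite M] (a : M) :
    0 < period a ∧ ∃ k, rep a (k + period a) = rep a k := by
  refine Nat.sInf_mem (s := {t | 0 < t ∧ ∃ k, rep a (k + t) = rep a k}) ?_
  obtain ⟨i, j, hij, heq⟩ := Finite.exists_ne_map_eq_of_infinite (rep a)
  wlog hlt : i < j generalizing i j
  · exact this j i hij.symm heq.symm (by lia)
  exact ⟨j - i, by lia, i, by rw [Nat.add_sub_cancel' hlt.le, heq]⟩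

theorem period_nsmul_addUnits [Finite M] (u : AddUnits M) : period (u : M) • u = 0 := by
  obtain ⟨-, k, hk⟩ := period_spec (u : M)
  rw [rep_eq_nsmul, rep_eq_nsmul, ← AddUnits.val_nsmul_eq_nsmul_val,
    ← AddUnits.val_nsmul_eq_nsmul_val, AddUnits.val_inj, add_right_comm, add_nsmul] at hk
  exact add_eq_left.1 hk

section Kappa

variable [Fintype M]

theorem expS_pos : 0 < expS M := by
  rw [Nat.pos_iff_ne_zero, expS, Ne, Finset.lcm_eq_zero_iff]
  rintro ⟨a, -, ha⟩
  exact (period_spec a).1.ne' ha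

theorem card_le_kappa : Fintype.card M ≤ kappa M := by
  simpa [kappa, Nat.ceilDiv_eq_add_pred_div, mul_comm] using
    le_smul_ceilDiv (b := Fintype.card M) (expS_pos (M := M))

theorem kappa_nsmul_addUnits (u : AddUnits M) : kappa M • u = 0 := by
  have hdvd : period (u : M) ∣ kappa M :=
    (Finset.dvd_lcm (Finset.mem_univ (u : M))).trans (Dvd.intro_left _ rfl)
  obtain ⟨c, hc⟩ := hdvd
  rw [hc, mul_nsmul, period_nsmul_addUnits, nsmul_zero]

end Kappa

theorem davC_add_le_add_one_of_forall [Finite M] {m ℓ : ℕ} (hm : 0 < m)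
    (hℓ : ∀ T : Multiset M, ℓ ≤ card T → ∃ B ≤ T, card T - card B = m ∧ B.sum = T.sum) :
    DavC M + m ≤ ℓ + 1 := by
  classical
  by_contra! hlt
  obtain ⟨T, hT, hcard⟩ := exists_not_reducible (M := M)
  -- Zeros may be added to or removed from `B` freely, so `B ∩ T` inherits the sum of `T`.
  obtain ⟨B, hB, hBm, hBsum⟩ := hℓ (T + Multiset.replicate (m - 1) 0)
    (by rw [Multiset.card_add, Multiset.card_replicate]; lia)
  rw [Multiset.card_add, Multiset.card_replicate] at hBm
  obtain ⟨n, -, hn⟩ := Multiset.le_replicate_iff.1 (tsub_le_iff_left.2 hB)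
  refine hT (reducible_iff.2 ⟨B ∩ T, lt_of_le_of_ne Multiset.inter_le_right fun h => ?_, ?_⟩)
  · have := Multiset.card_le_card (h.ge.trans Multiset.inter_le_left)
    lia
  · calc (B ∩ T).sum = (B - T + B ∩ T).sum := by simp [hn]
      _ = T.sum := by rw [Multiset.sub_add_inter, hBsum]; simp

/-! ### The stabilizer of the sum of the non-units -/

theorem exists_addUnits_map_val_add_eq (T : Multiset M) :
    ∃ (V : Multiset (AddUnits M)) (N : Multiset M),
      (∀ c ∈ N, ¬ IsAddUnit c) ∧ V.map AddUnits.val + N = T := by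
  classical
  obtain ⟨V, hV⟩ := CanLift.prf (β := Multiset (AddUnits M)) (T.filter IsAddUnit)
    fun c hc => (Multiset.mem_filter.1 hc).2
  exact ⟨V, T.filter (¬ IsAddUnit ·), fun c hc => (Multiset.mem_filter.1 hc).2,
    by rw [hV, Multiset.filter_add_not]⟩

theorem exists_le_addUnits_map_val_eq {V : Multiset (AddUnits M)} {N C : Multiset M}
    (hN : ∀ c ∈ N, ¬ IsAddUnit c) (hC : ∀ c ∈ C, IsAddUnit c)
    (hCVN : C ≤ V.map AddUnits.val + N) : ∃ W ≤ V, W.map AddUnits.val = C := by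
  classical
  refine exists_le_map_eq_of_le_map ?_
  calc C = C.filter IsAddUnit := (Multiset.filter_eq_self.2 hC).symm
    _ ≤ (V.map AddUnits.val + N).filter IsAddUnit := Multiset.filter_le_filter _ hCVN
    _ = (V.map AddUnits.val).filter IsAddUnit := by
        rw [Multiset.filter_add, Multiset.filter_eq_nil.2 hN, add_zero]
    _ ≤ V.map AddUnits.val := Multiset.filter_le _ _

theorem forall_mem_isAddUnit_of_isAddUnit_sum {C : Multiset M} (hC : IsAddUnit C.sum) :
    ∀ c ∈ C, IsAddUnit c := by
  induction C using Quotient.inductionOn with | _ L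
  rw [Multiset.quot_mk_to_coe, Multiset.sum_coe] at hC
  exact List.sum_isAddUnit_iff.1 hC

theorem sum_map_mk_stabilizer_eq_zero_iff {y : M} {W : Multiset (AddUnits M)} :
    (W.map (QuotientAddGroup.mk' (AddAction.stabilizer (AddUnits M) y))).sum = 0 ↔
      (W.map AddUnits.val).sum + y = y := by
  rw [← map_multiset_sum, QuotientAddGroup.mk'_apply, QuotientAddGroup.eq_zero_iff,
    AddAction.mem_stabilizer_iff, AddUnits.vadd_def, vadd_eq_add, ← AddUnits.coeHom_apply,
    map_multiset_sum]
  rfl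

/-- `u` is absorbing, that is, a zero element in the terminology of semigroups. -/
def IsAbsorbing (u : M) : Prop :=
  ∀ a : M, a + u = u

theorem IsAbsorbing.add_left {u : M} (hu : IsAbsorbing u) (a : M) : IsAbsorbing (a + u) :=
  (hu a).symm ▸ hu

theorem IsAbsorbing.of_isAddUnit_add {a u : M} (ha : IsAddUnit a) (hu : IsAbsorbing (a + u)) :
    IsAbsorbing u := by
  obtain ⟨b, hb⟩ := ha.exists_neg'
  have := hu.add_left b
  rwa [← add_assoc, hb, zero_add] at this

section Upper

variable [Finite M] {m : ℕ}

theorem exists_le_sum_eq_of_isAbsorbing_sum {T : Multiset M} (hT : DavC M + m ≤ card T + 1)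
    (hsum : IsAbsorbing T.sum) : ∃ B ≤ T, card B + m = card T ∧ B.sum = T.sum := by
  obtain ⟨B, hBT, hB, hBsum⟩ := exists_le_card_lt_davC_sum_eq T
  obtain ⟨C, rfl⟩ := Multiset.le_iff_exists_add.1 hBT
  rw [Multiset.card_add] at hT
  obtain ⟨R, hRC, hR⟩ := exists_le_card_eq (s := C) (n := card C - m) (Nat.sub_le _ _)
  refine ⟨B + R, by gcongr, ?_, ?_⟩
  · rw [Multiset.card_add, Multiset.card_add]
    lia
  · rw [Multiset.sum_add, hBsum, add_comm, hsum]

variable (hM : ∀ c u : M, c + u = u → IsAddUnit c ∨ IsAbsorbing u)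
include hM

theorem exists_le_addUnits_sum_add_eq {N : Multiset M} (hN : ∀ c ∈ N, ¬ IsAddUnit c)
    (hNsum : ¬ IsAbsorbing N.sum) {V : Multiset (AddUnits M)} (hV : DavC M ≤ card V + card N) :
    ∃ W ≤ V, W ≠ 0 ∧ (W.map AddUnits.val).sum + N.sum = N.sum := by
  have hVunit : IsAddUnit (V.map AddUnits.val).sum :=
    ⟨V.sum, map_multiset_sum (AddUnits.coeHom M) V⟩
  obtain ⟨B, hBlt, hBsum⟩ := reducible_iff.1
    (reducible_of_davC_le (T := V.map AddUnits.val + N) (by simpa using hV))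
  obtain ⟨C, hBC⟩ := Multiset.le_iff_exists_add.1 hBlt.le
  have hCsum : C.sum + (V.map AddUnits.val + N).sum = (V.map AddUnits.val + N).sum := by
    conv_lhs => rw [← hBsum, add_comm, ← Multiset.sum_add, ← hBC]
  have hCunit : IsAddUnit C.sum := (hM _ _ hCsum).resolve_right fun habs =>
    hNsum (.of_isAddUnit_add hVunit (Multiset.sum_add _ N ▸ habs))
  obtain ⟨W, hWV, rfl⟩ := exists_le_addUnits_map_val_eq hN
    (forall_mem_isAddUnit_of_isAddUnit_sum hCunit) (hBC ▸ Multiset.le_add_left C B)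
  refine ⟨W, hWV, ?_, ?_⟩
  · rintro rfl
    exact hBlt.ne (by simpa using hBC.symm)
  · rw [Multiset.sum_add, add_left_comm] at hCsum
    exact hVunit.add_left_cancel hCsum

theorem forcesZeroSum_quotient_stabilizer {N : Multiset M} (hN : ∀ c ∈ N, ¬ IsAddUnit c)
    (hNsum : ¬ IsAbsorbing N.sum) :
    ForcesZeroSum (AddUnits M ⧸ AddAction.stabilizer (AddUnits M) N.sum) (DavC M - card N) := by
  intro V' hV'
  obtain ⟨V, rfl⟩ := Multiset.map_surjective_of_surjective
    (QuotientAddGroup.mk'_surjective (AddAction.stabilizer (AddUnits M) N.sum)) V'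
  obtain ⟨W, hWV, hW, hWsum⟩ := exists_le_addUnits_sum_add_eq hM hN hNsum (V := V)
    (by simpa using hV')
  exact ⟨_, Multiset.map_le_map hWV, by simpa using hW, sum_map_mk_stabilizer_eq_zero_iff.2 hWsum⟩

theorem exists_le_sum_eq_of_not_isAbsorbing_sum (hm : Nat.card M ≤ m)
    (hexp : ∀ u : AddUnits M, m • u = 0) {T : Multiset M} (hT : DavC M + m ≤ card T + 1)
    (hsum : ¬ IsAbsorbing T.sum) : ∃ B ≤ T, card B + m = card T ∧ B.sum = T.sum := by
  obtain ⟨V, N, hN, rfl⟩ := exists_addUnits_map_val_add_eq T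
  rw [Multiset.sum_add] at hsum
  have hNsum : ¬ IsAbsorbing N.sum := fun habs => hsum (habs.add_left _)
  have hforces := forcesZeroSum_quotient_stabilizer hM hN hNsum
  have := Finite.of_injective AddUnits.val (AddUnits.val_injective (α := M))
  set π := QuotientAddGroup.mk' (AddAction.stabilizer (AddUnits M) N.sum)
  have hπsurj : Function.Surjective π := QuotientAddGroup.mk'_surjective _
  have hcard : Nat.card (AddUnits M ⧸ AddAction.stabilizer (AddUnits M) N.sum) ≤ m :=
    calc _ ≤ Nat.card (AddUnits M) := Nat.card_le_card_of_surjective π hπsurj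
      _ ≤ Nat.card M := Nat.card_le_card_of_injective _ AddUnits.val_injective
      _ ≤ m := hm
  have hpos := hforces.pos
  obtain ⟨W', hW', hWcard, hWsum⟩ := hforces.exists_zeroSum_card_eq hcard
    (hπsurj.forall.2 fun u => by rw [← map_nsmul, hexp, map_zero])
    (T := V.map π) (by
      simp only [Multiset.card_add, Multiset.card_map] at hT ⊢
      lia)
  obtain ⟨W, hWV, rfl⟩ := exists_le_map_eq_of_le_map hW'
  obtain ⟨R, rfl⟩ := Multiset.le_iff_exists_add.1 hWV
  rw [Multiset.card_map] at hWcard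
  refine ⟨R.map AddUnits.val + N, ?_, ?_, ?_⟩
  · gcongr
    exact Multiset.le_add_left R W
  · simp only [Multiset.card_add, Multiset.card_map, hWcard]
    lia
  · rw [Multiset.map_add, Multiset.sum_add, Multiset.sum_add, Multiset.sum_add, add_right_comm,
      sum_map_mk_stabilizer_eq_zero_iff.1 hWsum, add_comm]

end Upper

end Monoid

/-- A commutative semigroup with identity element `e`, as an additive monoid; an abbreviation, so
that its underlying semigroup structure unfolds to the given one. -/
abbrev addCommMonoidOfIdentity {S : Type*} [inst : AddCommSemigroup S] (e : S)
    (he : ∀ a, e + a = a) : AddCommMonoid S :=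
  { inst with
    zero := e
    zero_add := he
    add_zero := fun a => (add_comm a e).trans (he a)
    nsmul := @nsmulRec S ⟨e⟩ _
    nsmul_zero := fun _ => rfl
    nsmul_succ := fun _ _ => rfl }

theorem rep_add_eq_of_add_eq {S : Type} [AddCommSemigroup S] {c u : S} (h : c + u = u) (n : ℕ) :
    rep c n + u = u := by
  induction n with
  | zero => exact h
  | succ n ih => rw [rep, add_assoc, h, ih]

end EGZ

theorem IsElementary.exists_identity_forall_add_eq {S : Type} [AddCommSemigroup S] {G N : Set S}
    (hel : IsElementary S G N) : ∃ e : S, (∀ a, e + a = a) ∧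
      ∀ c u : S, c + u = u → (∃ b, c + b = e) ∨ ∀ a, a + u = u := by
  obtain ⟨hcover, -, -, ⟨e, -, he, hinv⟩, -, z, -, hz, hnil⟩ := hel
  refine ⟨e, he, fun c u hcu => (hcover c).imp (fun hc => ?_) fun hc a => ?_⟩
  · obtain ⟨b, -, hb⟩ := hinv c hc
    exact ⟨b, hb⟩
  · obtain ⟨n, hn⟩ := hnil c hc
    have hu : u = z := by rw [← EGZ.rep_add_eq_of_add_eq hcu n, hn, hz]
    rw [hu, add_comm, hz]

open EGZ in
theorem E_eq_of_elementary_general (M : Type) [AddCommMonoid M] [Fintype M]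
    (hM : ∀ c u : M, c + u = u → IsAddUnit c ∨ IsAbsorbing u) :
    EC M = DavC M + kappa M - 1 := by
  have hcard : Nat.card M ≤ kappa M := Nat.card_eq_fintype_card.trans_le card_le_kappa
  have hkappa : 0 < kappa M := Nat.card_pos.trans_le hcard
  have hD := davC_pos (M := M)
  refine IsLeast.csInf_eq ⟨⟨by lia, fun T hT => ?_⟩, fun ℓ ⟨_, hℓ⟩ => ?_⟩
  · obtain ⟨B, hBT, hB, hsum⟩ : ∃ B ≤ T, B.card + kappa M = T.card ∧ B.sum = T.sum := by
      by_cases habs : IsAbsorbing T.sum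
      · exact exists_le_sum_eq_of_isAbsorbing_sum (by lia) habs
      · exact exists_le_sum_eq_of_not_isAbsorbing_sum hM hcard kappa_nsmul_addUnits (by lia) habs
    exact ⟨B, hBT, by lia, eqSum_iff.2 hsum⟩
  · have := davC_add_le_add_one_of_forall hkappa fun T hT => by simpa only [eqSum_iff] using hℓ T hT
    lia

/-- For a finite elementary semigroup `S = G ∪ N`,
`E(S) = D(S) + κ(S) − 1`. -/
theorem E_eq_of_elementary (S : Type) [AddCommSemigroup S] [Fintype S]
    (G N : Set S) (hel : IsElementary S G N) :
    EGZ.EC S = EGZ.DavC S + EGZ.kappa S - 1 := by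
  obtain ⟨e, he, hunit⟩ := hel.exists_identity_forall_add_eq
  let _ : AddCommMonoid S := EGZ.addCommMonoidOfIdentity e he
  exact E_eq_of_elementary_general S fun c u hcu =>
    (hunit c u hcu).imp_left fun ⟨b, hb⟩ => .of_add_eq_zero b hb
end

section
/- Let S be a finite archimedean commutative semigroup with unique idempotent e, kernel K = e + S, and Rees quotient nilsemigroup N = S/K. If both K and N are nontrivial (each has more than one element), then D(S) ≥ max(D(N), D(K) + 1). -/
/-- A commutative semigroup `S` is archimedean: for any `a, b ∈ S` there exist
`m, n > 0` and `x, y ∈ S` with `m·a = b + x` and `n·b = a + y`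
(here `EGZ.rep a m = (m+1)·a`, so `m` ranging over `ℕ` gives all positive multiples). -/
def IsArchimedean (S : Type) [AddCommSemigroup S] : Prop :=
  ∀ a b : S, (∃ m : ℕ, ∃ x : S, EGZ.rep a m = b + x) ∧
    (∃ n : ℕ, ∃ y : S, EGZ.rep b n = a + y)

/-!
A surjection carries reducible sequences to reducible sequences, so it cannot raise the Davenport
constant; this gives `D(N) ≤ D(S)`.

For `D(K) + 1 ≤ D(S)`, complete a sequence `W` over `K` to `g ::ₘ W` with sum `e`, where `g ∈ K`.
If `B` is a proper subsequence with the same sum, then `B` is nonempty because `e` is not an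
identity element of `S`, and its complement `C` also has sum `e` because `e` is an identity on `K`.
The added copy of `g` lies in one of `B` and `C`; the other is a zero-sum subsequence of `W`.
-/

namespace EGZ

theorem le_or_le_of_add_eq_cons {α : Type*} {A B W : Multiset α} {a : α}
    (h : A + B = a ::ₘ W) : A ≤ W ∨ B ≤ W := by
  have ha : a ∈ A + B := h ▸ Multiset.mem_cons_self a W
  rcases Multiset.mem_add.mp ha with haA | haB
  · obtain ⟨A', rfl⟩ := Multiset.exists_cons_of_mem haA
    rw [Multiset.cons_add, Multiset.cons_inj_right] at h
    exact Or.inr (h ▸ Multiset.le_add_left B A')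
  · obtain ⟨B', rfl⟩ := Multiset.exists_cons_of_mem haB
    rw [Multiset.add_cons, Multiset.cons_inj_right] at h
    exact Or.inl (h ▸ Multiset.le_add_right A B')

section

variable {S Q : Type} [AddCommSemigroup S] [AddCommSemigroup Q]

-- In `mSum`, the coercion of `T.map _` is elaborated as a monadic bind; this is its plain form.
theorem mSum_eq_sum_map (T : Multiset S) :
    mSum T = (T.map ((↑) : S → WithZero S)).sum := by
  simp only [mSum, Multiset.bind_def, Multiset.pure_def, Multiset.bind_singleton, Multiset.map_id']

theorem mSum_zero : mSum (0 : Multiset S) = 0 := rfl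

theorem mSum_add (A B : Multiset S) : mSum (A + B) = mSum A + mSum B := by
  simp only [mSum_eq_sum_map, Multiset.map_add, Multiset.sum_add]

theorem mSum_cons (a : S) (B : Multiset S) :
    mSum (a ::ₘ B) = (a : WithZero S) + mSum B := by
  simp only [mSum_eq_sum_map, Multiset.map_cons, Multiset.sum_cons]

theorem exists_mSum_eq_coe {B : Multiset S} (hB : B ≠ 0) :
    ∃ s : S, mSum B = (s : WithZero S) := by
  induction B using Multiset.induction_on with
  | empty => exact absurd rfl hB
  | cons a B ih =>
    rw [mSum_cons]
    rcases eq_or_ne B 0 with rfl | hB'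
    · exact ⟨a, by rw [mSum_zero, add_zero]⟩
    · obtain ⟨s, hs⟩ := ih hB'
      exact ⟨a + s, by rw [hs, WithZero.coe_add]⟩

theorem mSum_map (π : S →ₙ+ Q) (B : Multiset S) :
    mSum (B.map π) = WithZero.mapAddHom π (mSum B) := by
  simp only [mSum_eq_sum_map, map_multiset_sum, Multiset.map_map, Function.comp_def,
    WithZero.mapAddHom_coe]

theorem coe_add_mSum_of_forall_add_eq {e : S} {C : Multiset S} (hC : C ≠ 0)
    (heC : ∀ c ∈ C, e + c = c) : (e : WithZero S) + mSum C = mSum C := by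
  obtain ⟨c, hc⟩ := Multiset.exists_mem_of_ne_zero hC
  obtain ⟨C', rfl⟩ := Multiset.exists_cons_of_mem hc
  rw [mSum_cons, ← add_assoc, ← WithZero.coe_add, heC c hc]

theorem EqSum.map {A B : Multiset S} (h : EqSum A B) (π : S →ₙ+ Q)
    (hπ : Function.Surjective π) : EqSum (A.map π) (B.map π) := by
  rcases h with h | ⟨e, he, h⟩
  · exact Or.inl (by rw [mSum_map, mSum_map, h])
  · refine Or.inr ⟨π e, hπ.forall.2 fun a => by rw [← map_add, he], ?_⟩
    rcases h with ⟨hA, hB⟩ | ⟨hA, hB⟩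
    · exact Or.inl (by simp only [mSum_map, hA, hB, map_zero, WithZero.mapAddHom_coe, and_self])
    · exact Or.inr (by simp only [mSum_map, hA, hB, map_zero, WithZero.mapAddHom_coe, and_self])

theorem Reducible.map {T : Multiset S} (h : Reducible T) (π : S →ₙ+ Q)
    (hπ : Function.Surjective π) : Reducible (T.map π) := by
  obtain ⟨B, hBT, hB⟩ := h
  exact ⟨B.map π, Multiset.map_lt_map hBT, hB.map π hπ⟩

theorem not_reducible_zero : ¬ Reducible (0 : Multiset S) :=
  fun ⟨_, hB, _⟩ => not_lt_bot hB

theorem Reducible.exists_lt_mSum_eq {T : Multiset S} (h : Reducible T) {s : S}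
    (hT : mSum T = (s : WithZero S)) (hs : ¬ ∀ a, s + a = a) :
    ∃ B, B < T ∧ mSum B = (s : WithZero S) := by
  obtain ⟨B, hBT, hB | ⟨f, hf, ⟨-, hTf⟩ | ⟨-, hT₀⟩⟩⟩ := h
  · exact ⟨B, hBT, hB.trans hT⟩
  · obtain rfl : s = f := WithZero.coe_injective (hT.symm.trans hTf)
    exact absurd hf hs
  · exact absurd (hT.symm.trans hT₀) WithZero.coe_ne_zero

theorem reducible_of_lt_of_le {A A' T : Multiset S} (hlt : A < A') (hle : A' ≤ T)
    (hsum : mSum A = mSum A') : Reducible T := by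
  obtain ⟨C, rfl⟩ := Multiset.le_iff_exists_add.mp hle
  exact ⟨A + C, add_lt_add_left hlt C, Or.inl (by rw [mSum_add, mSum_add, hsum])⟩

/-- The semigroup `S` has a finite Davenport constant. Without this, `DavC S` is the infimum of
the empty set of naturals, which is the junk value `0`. -/
def HasDavC (S : Type) [AddCommSemigroup S] : Prop :=
  ∃ ℓ : ℕ, ∀ T : Multiset S, ℓ ≤ Multiset.card T → Reducible T

theorem hasDavC_of_finite [Finite S] : HasDavC S := by
  have : Finite (WithZero S) := inferInstanceAs (Finite (Option S))
  refine ⟨Nat.card (WithZero S), fun T hT => ?_⟩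
  induction T using Quotient.inductionOn with | _ l
  by_contra hirr
  -- The `l.length + 1` prefixes of an irreducible sequence have distinct sums.
  have hinj : Function.Injective
      fun i : Fin (l.length + 1) => mSum (l.take i : Multiset S) := by
    refine .of_lt_imp_ne fun i j hij hsum => hirr (reducible_of_lt_of_le ?_ ?_ hsum)
    · refine lt_of_le_of_ne (List.take_sublist_take_left hij.le).subperm fun h => ?_
      have hcard := congrArg Multiset.card h
      simp only [Multiset.coe_card, List.length_take] at hcard
      omega
    · exact (List.take_sublist _ l).subperm
  have hcard := Nat.card_le_card_of_injective _ hinj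
  rw [Nat.card_fin] at hcard
  exact absurd (hcard.trans hT) (Nat.not_succ_le_self _)

theorem HasDavC.reducible (hS : HasDavC S) {T : Multiset S} (hT : DavC S ≤ Multiset.card T) :
    Reducible T :=
  Nat.sInf_mem hS T hT

theorem HasDavC.davC_pos (hS : HasDavC S) : 0 < DavC S :=
  Nat.pos_of_ne_zero fun h => not_reducible_zero (hS.reducible h.le)

theorem HasDavC.davC_le_of_surjective (hS : HasDavC S) (π : S →ₙ+ Q)
    (hπ : Function.Surjective π) : DavC Q ≤ DavC S := by
  refine Nat.sInf_le fun T hT => ?_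
  obtain ⟨T, rfl⟩ := Multiset.map_surjective_of_surjective hπ T
  exact (hS.reducible (by rwa [Multiset.card_map] at hT)).map π hπ

/-- The ideal `e + S`. It is the kernel of `S` when `e` is the idempotent of the least ideal,
i.e. an idempotent of which every element of `S` is a summand. -/
def kernel (e : S) : Set S := {s | ∃ x, s = e + x}

theorem add_eq_of_mem_kernel {e k : S} (he : e + e = e) (hk : k ∈ kernel e) : e + k = k := by
  obtain ⟨x, rfl⟩ := hk
  rw [← add_assoc, he]

theorem exists_mem_kernel_add_mSum_eq {e : S} (he : e + e = e) (hdvd : ∀ a, ∃ y, e = a + y)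
    (W : Multiset S) : ∃ g ∈ kernel e, (g : WithZero S) + mSum W = e := by
  rcases eq_or_ne W 0 with rfl | hW
  · exact ⟨e, ⟨e, he.symm⟩, by rw [mSum_zero, add_zero]⟩
  · obtain ⟨a, ha⟩ := exists_mSum_eq_coe hW
    obtain ⟨y, hy⟩ := hdvd a
    refine ⟨e + y, ⟨y, rfl⟩, ?_⟩
    rw [ha, ← WithZero.coe_add, add_assoc, add_comm y a, ← hy, he]

/-- The Davenport constant of a group `K` with identity element `e`, realised as a subset of the
semigroup `S`, in its zero-sum form. -/
noncomputable def zeroSumDavC (K : Set S) (e : S) : ℕ :=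
  sInf {d : ℕ | ∀ W : Multiset S, (∀ w ∈ W, w ∈ K) → d ≤ Multiset.card W →
    ∃ B : Multiset S, B ≤ W ∧ B ≠ 0 ∧ mSum B = (e : WithZero S)}

theorem Reducible.exists_add_eq_mSum_eq {e : S} (hid : ¬ ∀ a, e + a = a) {T : Multiset S}
    (h : Reducible T) (heT : ∀ t ∈ T, e + t = t) (hT : mSum T = (e : WithZero S)) :
    ∃ B C, B + C = T ∧ (B ≠ 0 ∧ mSum B = (e : WithZero S)) ∧
      (C ≠ 0 ∧ mSum C = (e : WithZero S)) := by
  obtain ⟨B, hBT, hB⟩ := h.exists_lt_mSum_eq hT hid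
  obtain ⟨C, rfl⟩ := Multiset.le_iff_exists_add.mp hBT.le
  have hB₀ : B ≠ 0 := by
    rintro rfl
    exact WithZero.coe_ne_zero hB.symm
  have hC₀ : C ≠ 0 := by
    rintro rfl
    exact hBT.ne (add_zero B).symm
  have hC : mSum C = (e : WithZero S) := by
    calc mSum C = e + mSum C :=
          (coe_add_mSum_of_forall_add_eq hC₀
            fun c hc => heT c (Multiset.mem_add.mpr (Or.inr hc))).symm
      _ = mSum (B + C) := by rw [mSum_add, hB]
      _ = e := hT
  exact ⟨B, C, rfl, ⟨hB₀, hB⟩, hC₀, hC⟩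

theorem HasDavC.zeroSumDavC_kernel_lt (hS : HasDavC S) {e : S} (he : e + e = e)
    (hdvd : ∀ a, ∃ y, e = a + y) (hproper : ∃ s, s ∉ kernel e) :
    zeroSumDavC (kernel e) e < DavC S := by
  have hid : ¬ ∀ a, e + a = a := fun h => hproper.elim fun s hs => hs ⟨s, (h s).symm⟩
  suffices zeroSumDavC (kernel e) e ≤ DavC S - 1 from
    Nat.lt_of_le_pred hS.davC_pos this
  refine Nat.sInf_le fun W hWK hW => ?_
  obtain ⟨g, hg, hgW⟩ := exists_mem_kernel_add_mSum_eq he hdvd W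
  have hred : Reducible (g ::ₘ W) :=
    hS.reducible (by rw [Multiset.card_cons]; exact Nat.sub_le_iff_le_add.mp hW)
  have hfix : ∀ t ∈ g ::ₘ W, e + t = t := fun t ht =>
    add_eq_of_mem_kernel he ((Multiset.mem_cons.mp ht).elim (fun h => h ▸ hg) (hWK t))
  obtain ⟨B, C, hBC, hB, hC⟩ :=
    hred.exists_add_eq_mSum_eq hid hfix ((mSum_cons g W).trans hgW)
  rcases le_or_le_of_add_eq_cons hBC with hBW | hCW
  · exact ⟨B, hBW, hB⟩
  · exact ⟨C, hCW, hC⟩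

theorem rep_eq_self {e : S} (he : e + e = e) (n : ℕ) : rep e n = e := by
  induction n with
  | zero => rfl
  | succ n ih => rw [rep, ih, he]

theorem exists_eq_add_of_isArchimedean (harch : IsArchimedean S) {e : S} (he : e + e = e)
    (a : S) : ∃ y, e = a + y := by
  obtain ⟨n, y, hy⟩ := (harch a e).2
  exact ⟨y, by rw [← hy, rep_eq_self he]⟩

end

end EGZ

open EGZ in
theorem davenport_ge_max_general {S Q : Type} [AddCommSemigroup S] [AddCommSemigroup Q]
    (hS : HasDavC S) {e : S} (he : e + e = e) (hdvd : ∀ a, ∃ y, e = a + y)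
    (hproper : ∃ s, s ∉ kernel e) (π : S →ₙ+ Q) (hπ : Function.Surjective π) :
    max (DavC Q) (zeroSumDavC (kernel e) e + 1) ≤ DavC S :=
  max_le (hS.davC_le_of_surjective π hπ) (hS.zeroSumDavC_kernel_lt he hdvd hproper)

/-- Let `S` be a finite archimedean commutative semigroup with unique
idempotent `e`, kernel `K = e + S` (an abelian group with identity `e`), and Rees quotient
nilsemigroup `N = S/K`, presented as a finite commutative semigroup `Q` with a surjective
additive map `π : S → Q` whose kernel congruence is the Rees congruence of `K`.  If both
`K` and `N` are nontrivial, then `D(S) ≥ max(D(N), D(K) + 1)`, where the classical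
Davenport constant `D(K)` of the group `K` is the smallest `d` such that every sequence of
at least `d` elements of `K` has a nonempty subsequence with sum `e` (the zero of `K`). -/
theorem davenport_ge_max (S Q : Type) [AddCommSemigroup S] [Fintype S]
    [AddCommSemigroup Q] [Fintype Q]
    (harch : IsArchimedean S)
    (e : S) (he : e + e = e) (huniq : ∀ f : S, f + f = f → f = e)
    (K : Set S) (hK : K = {s : S | ∃ x : S, s = e + x})
    (π : S → Q) (hsurj : Function.Surjective π)
    (hhom : ∀ a b : S, π (a + b) = π a + π b)
    (hker : ∀ a b : S, π a = π b ↔ (a = b ∨ (a ∈ K ∧ b ∈ K)))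
    (hKnontriv : ∃ k ∈ K, k ≠ e) (hNnontriv : ∃ s : S, s ∉ K)
    (DK : ℕ)
    (hDK : DK = sInf {d : ℕ | ∀ W : Multiset S, (∀ w ∈ W, w ∈ K) →
      d ≤ Multiset.card W →
      ∃ B : Multiset S, B ≤ W ∧ B ≠ 0 ∧ EGZ.mSum B = (e : WithZero S)}) :
    max (EGZ.DavC Q) (DK + 1) ≤ EGZ.DavC S := by
  subst hK hDK
  exact davenport_ge_max_general EGZ.hasDavC_of_finite he
    (EGZ.exists_eq_add_of_isArchimedean harch he) hNnontriv ⟨π, hhom⟩ hsurj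
end
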